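/- γ_r → e^{−γ} as r → ∞. -/

import Mathlib

open Filter

/-- Generalized Euler constant for a finite set of primes `P`:
`γ(P) = ∏_{p∈P}(1 - 1/p) * (γ + ∑_{p∈P} log p / (p-1))`. -/
noncomputable def gammaP (P : Finset ℕ) : ℝ :=
  (∏ p ∈ P, (1 - 1 / (p : ℝ))) *
    (Real.eulerMascheroniConstant + ∑ p ∈ P, Real.log p / ((p : ℝ) - 1))

/-- `γ_r = γ({p_1, …, p_r})`, the generalized Euler constant for the first `r` primes. -/
noncomputable def gammaR (r : ℕ) : ℝ :=
  gammaP ((Finset.range r).image (Nat.nth Nat.Prime))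

/-!
Write `γ({p ≤ x})` as `∏_{p ≤ x} (1 - 1/p) * log x` times `(γ + ∑_{p ≤ x} log p / (p - 1)) / log x`.
By Mertens' first theorem, which comes from comparing Stirling's and Legendre's formulas for
`log n!`, the second factor tends to `1`. The first tends to `e^{-γ}` by Mertens' third theorem,
which follows from the second theorem with its constant,
`∑_{p ≤ x} 1/p - log log x → γ + ∑_p (log (1 - 1/p) + 1/p)`.

Existence of that limit follows from the first theorem by Dirichlet's test. To identify it, compare
`∑_p p^(-1-s)` with `log ζ(1+s) = -log s + o(1)` as `s → 0+`. On the other side, replacing `p^(-s)`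
by `x^m` with `x = 2^(-s)` for `2^(m-1) < p ≤ 2^m` changes the sum by a factor between `x` and `1`,
hence by `o(1)`, and leaves a power series in `x`. Its coefficients have partial sums
`log M + const + o(1)`, as do those of `-log (1 - x) = ∑ x^m / m`, where the constant is `γ`;
Abel's theorem applied to the difference is what brings `γ` into the limit.
-/

open Real Topology

section MertensFirst

theorem log_factorial_eq_sum_primesLE (n : ℕ) :
    log n.factorial = ∑ p ∈ n.primesLE, (n.factorial.factorization p : ℝ) * log p := by
  rw [log_nat_eq_sum_factorization]
  refine Finsupp.sum_of_support_subset _ (fun p hp ↦ ?_) _ fun p _ ↦ by simp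
  have hp' := Nat.mem_primeFactors.1 hp
  exact Nat.mem_primesLE.2 ⟨hp'.1.dvd_factorial.1 hp'.2.1, hp'.1⟩

theorem factorization_factorial_le_div_sub_one {p : ℕ} (hp : p.Prime) (n : ℕ) :
    (n.factorial.factorization p : ℝ) ≤ n / ((p : ℝ) - 1) :=
  calc (n.factorial.factorization p : ℝ) ≤ ((n / (p - 1) : ℕ) : ℝ) :=
        mod_cast Nat.factorization_factorial_le_div_pred hp n
    _ ≤ n / ((p - 1 : ℕ) : ℝ) := Nat.cast_div_le
    _ = n / ((p : ℝ) - 1) := by rw [Nat.cast_sub hp.one_le, Nat.cast_one]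

theorem div_sub_one_le_factorization_factorial {p : ℕ} (hp : p.Prime) (n : ℕ) :
    (n : ℝ) / p - 1 ≤ n.factorial.factorization p := by
  have hdiv : n / p ≤ n.factorial.factorization p := by
    have hdvd := Nat.factorial_dvd_factorial (Nat.mul_div_le n p)
    have hle := (Nat.factorization_le_iff_dvd (Nat.factorial_ne_zero _)
      (Nat.factorial_ne_zero _)).2 hdvd p
    rw [Nat.factorization_factorial_mul hp] at hle
    omega
  have hfloor : (n : ℝ) / p < (n / p : ℕ) + 1 := by
    rw [← Nat.floor_div_eq_div (K := ℝ)]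
    exact Nat.lt_floor_add_one _
  have hdiv' : ((n / p : ℕ) : ℝ) ≤ n.factorial.factorization p := mod_cast hdiv
  linarith

theorem log_sub_one_le_sum_log_div_sub_one (n : ℕ) :
    log n - 1 ≤ ∑ p ∈ n.primesLE, log p / ((p : ℝ) - 1) := by
  rcases eq_or_ne n 0 with rfl | hn
  · simp
  have hstirling : n * log n - n ≤ log n.factorial := by
    have := Stirling.le_log_factorial_stirling hn
    have := log_natCast_nonneg n
    have := log_nonneg (by linarith [pi_gt_three] : 1 ≤ 2 * π)
    linarith
  have hlegendre : log n.factorial ≤ n * ∑ p ∈ n.primesLE, log p / ((p : ℝ) - 1) := by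
    rw [log_factorial_eq_sum_primesLE, Finset.mul_sum]
    refine Finset.sum_le_sum fun p hp ↦ ?_
    rw [mul_div_left_comm, mul_comm]
    exact mul_le_mul_of_nonneg_left
      (factorization_factorial_le_div_sub_one (Nat.prime_of_mem_primesLE hp) n)
      (log_natCast_nonneg p)
  have hn0 : (0 : ℝ) < n := by positivity
  refine le_of_mul_le_mul_left ?_ hn0
  linarith

theorem sum_log_div_le_log_add_log_four (n : ℕ) :
    ∑ p ∈ n.primesLE, log p / p ≤ log n + log 4 := by
  rcases eq_or_ne n 0 with rfl | hn
  · simpa using log_nonneg (by norm_num : (1 : ℝ) ≤ 4)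
  have hlegendre : n * ∑ p ∈ n.primesLE, log p / p - Chebyshev.theta n ≤ log n.factorial := by
    rw [log_factorial_eq_sum_primesLE, Chebyshev.theta_eq_sum_primesLE_log, Finset.mul_sum,
      ← Finset.sum_sub_distrib]
    refine Finset.sum_le_sum fun p hp ↦ ?_
    calc n * (log p / p) - log p = (n / p - 1) * log p := by ring
      _ ≤ n.factorial.factorization p * log p :=
        mul_le_mul_of_nonneg_right
          (div_sub_one_le_factorization_factorial (Nat.prime_of_mem_primesLE hp) n)
          (log_natCast_nonneg p)
  have hfactorial : log n.factorial ≤ n * log n := by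
    rw [← log_pow]
    exact log_le_log (by positivity) (mod_cast Nat.factorial_le_pow n)
  have hchebyshev := Chebyshev.theta_le_log4_mul_x n.cast_nonneg
  have hn0 : (0 : ℝ) < n := by positivity
  refine le_of_mul_le_mul_left ?_ hn0
  linarith

theorem summable_log_div_mul_sub_one :
    Summable fun n : ℕ ↦ log n / (n * ((n : ℝ) - 1)) := by
  have hrpow : Summable fun n : ℕ ↦ 4 * (1 / (n : ℝ) ^ (3 / 2 : ℝ)) :=
    (summable_one_div_nat_rpow.2 (by norm_num)).mul_left 4
  refine hrpow.of_norm_bounded_eventually_nat ?_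
  filter_upwards [eventually_ge_atTop 2] with n hn
  have hn' : (2 : ℝ) ≤ n := mod_cast hn
  have hn0 : (0 : ℝ) < n := by linarith
  have hlog : log n ≤ (n : ℝ) ^ (1 / 2 : ℝ) / (1 / 2) := log_le_rpow_div hn0.le (by norm_num)
  have hsq : (n : ℝ) ^ (1 / 2 : ℝ) * (n : ℝ) ^ (3 / 2 : ℝ) = n ^ 2 := by
    rw [← rpow_add hn0, ← rpow_natCast]
    norm_num
  rw [norm_of_nonneg (div_nonneg (log_natCast_nonneg n) (by nlinarith))]
  calc log n / (n * ((n : ℝ) - 1)) ≤ ((n : ℝ) ^ (1 / 2 : ℝ) / (1 / 2)) / (n ^ 2 / 2) := by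
        gcongr
        nlinarith
    _ = 4 * (1 / (n : ℝ) ^ (3 / 2 : ℝ)) := by
        rw [← hsq]
        field_simp
        norm_num

theorem log_div_sub_one_eq {n : ℕ} (hn : 2 ≤ n) :
    log n / ((n : ℝ) - 1) = log n / n + log n / (n * ((n : ℝ) - 1)) := by
  have hn' : (2 : ℝ) ≤ n := mod_cast hn
  have : (n : ℝ) - 1 ≠ 0 := by linarith
  field_simp
  ring

theorem exists_sum_log_div_sub_one_le_sum_log_div_add :
    ∃ K, ∀ n : ℕ, ∑ p ∈ n.primesLE, log p / ((p : ℝ) - 1) ≤ ∑ p ∈ n.primesLE, log p / p + K := by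
  refine ⟨∑' n : ℕ, log n / (n * ((n : ℝ) - 1)), fun n ↦ ?_⟩
  rw [Finset.sum_congr rfl fun p hp ↦ log_div_sub_one_eq (Nat.two_le_of_mem_primesLE hp),
    Finset.sum_add_distrib]
  gcongr
  refine summable_log_div_mul_sub_one.sum_le_tsum _ fun k _ ↦ ?_
  rcases k.eq_zero_or_pos with rfl | hk
  · simp
  have hk' : (1 : ℝ) ≤ k := mod_cast hk
  exact div_nonneg (log_natCast_nonneg k) (mul_nonneg k.cast_nonneg (by linarith))

theorem exists_abs_sum_log_div_sub_log_le :
    ∃ C, ∀ n : ℕ, |∑ p ∈ n.primesLE, log p / p - log n| ≤ C := by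
  obtain ⟨K, hK⟩ := exists_sum_log_div_sub_one_le_sum_log_div_add
  refine ⟨max (1 + K) (log 4), fun n ↦ abs_le.2 ⟨?_, ?_⟩⟩
  · linarith [hK n, log_sub_one_le_sum_log_div_sub_one n, le_max_left (1 + K) (log 4)]
  · linarith [sum_log_div_le_log_add_log_four n, le_max_right (1 + K) (log 4)]

theorem exists_abs_sum_log_div_sub_one_sub_log_le :
    ∃ C, ∀ n : ℕ, |∑ p ∈ n.primesLE, log p / ((p : ℝ) - 1) - log n| ≤ C := by
  obtain ⟨K, hK⟩ := exists_sum_log_div_sub_one_le_sum_log_div_add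
  refine ⟨max 1 (log 4 + K), fun n ↦ abs_le.2 ⟨?_, ?_⟩⟩
  · linarith [log_sub_one_le_sum_log_div_sub_one n, le_max_left 1 (log 4 + K)]
  · linarith [hK n, sum_log_div_le_log_add_log_four n, le_max_right 1 (log 4 + K)]

theorem tendsto_log_natCast_atTop : Tendsto (fun n : ℕ ↦ log n) atTop atTop :=
  tendsto_log_atTop.comp tendsto_natCast_atTop_atTop

theorem tendsto_sum_log_div_sub_one_div_log :
    Tendsto (fun n : ℕ ↦ (∑ p ∈ n.primesLE, log p / ((p : ℝ) - 1)) / log n) atTop (𝓝 1) := by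
  obtain ⟨C, hC⟩ := exists_abs_sum_log_div_sub_one_sub_log_le
  have herr : Tendsto (fun n : ℕ ↦ (∑ p ∈ n.primesLE, log p / ((p : ℝ) - 1) - log n) / log n)
      atTop (𝓝 0) := by
    refine squeeze_zero_norm (fun n ↦ ?_) (tendsto_log_natCast_atTop.const_div_atTop C)
    rw [norm_div, norm_of_nonneg (log_natCast_nonneg n)]
    exact div_le_div_of_nonneg_right (hC n) (log_natCast_nonneg n)
  have hadd := herr.add_const 1
  rw [zero_add] at hadd
  refine hadd.congr' ?_
  filter_upwards [eventually_ge_atTop 2] with n hn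
  have hlog : log n ≠ 0 := (log_pos (mod_cast hn)).ne'
  rw [sub_div, div_self hlog, sub_add_cancel]

end MertensFirst

section MertensSecond

theorem summable_log_sub_log_sub_div {x : ℕ → ℝ} {K : ℝ} (hpos : ∀ n, 0 < x n)
    (hmono : Monotone x) (hK : ∀ n, x (n + 1) - x n ≤ K) :
    Summable fun n ↦ log (x (n + 1)) - log (x n) - (x (n + 1) - x n) / x (n + 1) := by
  have hK0 : 0 ≤ K := (sub_nonneg.2 (hmono (Nat.le_succ 0))).trans (hK 0)
  have hlower (n : ℕ) :
      0 ≤ log (x (n + 1)) - log (x n) - (x (n + 1) - x n) / x (n + 1) := by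
    have hlog := one_sub_inv_le_log_of_pos (div_pos (hpos (n + 1)) (hpos n))
    rw [inv_div, log_div (hpos _).ne' (hpos _).ne'] at hlog
    rw [sub_div, div_self (hpos _).ne']
    linarith
  have hupper (n : ℕ) : log (x (n + 1)) - log (x n) - (x (n + 1) - x n) / x (n + 1)
      ≤ -K * (x (n + 1))⁻¹ - -K * (x n)⁻¹ := by
    have hlog := log_le_sub_one_of_pos (div_pos (hpos (n + 1)) (hpos n))
    rw [log_div (hpos _).ne' (hpos _).ne'] at hlog
    have hinv : (x (n + 1))⁻¹ ≤ (x n)⁻¹ := inv_anti₀ (hpos n) (hmono n.le_succ)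
    calc log (x (n + 1)) - log (x n) - (x (n + 1) - x n) / x (n + 1)
        ≤ x (n + 1) / x n - 1 - (x (n + 1) - x n) / x (n + 1) := by linarith
      _ = (x (n + 1) - x n) * ((x n)⁻¹ - (x (n + 1))⁻¹) := by
        have := (hpos n).ne'
        have := (hpos (n + 1)).ne'
        field_simp
      _ ≤ K * ((x n)⁻¹ - (x (n + 1))⁻¹) :=
        mul_le_mul_of_nonneg_right (hK n) (sub_nonneg.2 hinv)
      _ = -K * (x (n + 1))⁻¹ - -K * (x n)⁻¹ := by ring
  refine summable_of_sum_range_le (c := K * (x 0)⁻¹) hlower fun n ↦ ?_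
  refine (Finset.sum_le_sum fun i _ ↦ hupper i).trans ?_
  rw [Finset.sum_range_sub fun i ↦ -K * (x i)⁻¹]
  have := mul_nonneg hK0 (inv_pos.2 (hpos n)).le
  linarith

theorem summable_log_log_sub_log_log_sub_div :
    Summable fun n : ℕ ↦ log (log (n + 3 : ℕ)) - log (log (n + 2 : ℕ)) -
      (log (n + 3 : ℕ) - log (n + 2 : ℕ)) / log (n + 3 : ℕ) := by
  have hpos (n : ℕ) : (0 : ℝ) < (n + 2 : ℕ) := by positivity
  refine summable_log_sub_log_sub_div (x := fun n : ℕ ↦ log (n + 2 : ℕ)) (K := 1)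
    (fun n ↦ log_pos (by push_cast; linarith [n.cast_nonneg (α := ℝ)]))
    (fun m n h ↦ log_le_log (hpos m) (by gcongr)) fun n ↦ ?_
  rw [← log_div (hpos (n + 1)).ne' (hpos n).ne']
  refine (log_le_sub_one_of_pos (div_pos (hpos (n + 1)) (hpos n))).trans ?_
  rw [tsub_le_iff_right, div_le_iff₀ (hpos n)]
  push_cast
  linarith [n.cast_nonneg (α := ℝ)]

/-- With `z k = a k - (log k - log (k - 1))`, the series `∑ z k / log k` converges by Dirichlet's
test, and `∑ (log k - log (k - 1)) / log k` differs from the telescoping series for `log log` by a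
convergent one. -/
theorem exists_tendsto_sum_div_log_sub_log_log {a : ℕ → ℝ} {C : ℝ}
    (h : ∀ n, |∑ k ∈ Finset.range (n + 1), a k - log n| ≤ C) :
    ∃ M, Tendsto (fun n : ℕ ↦ ∑ k ∈ Finset.range (n + 1), a k / log k - log (log n))
      atTop (𝓝 M) := by
  set F : ℕ → ℝ := fun n ↦ ∑ k ∈ Finset.range (n + 1), a k / log k - log (log n)
  set A : ℕ → ℝ := fun n ↦ ∑ k ∈ Finset.range (n + 1), a k - log n
  have hanti : Antitone fun n : ℕ ↦ (log (n + 3 : ℕ))⁻¹ := fun m n hmn ↦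
    inv_anti₀ (log_pos (by push_cast; linarith [m.cast_nonneg (α := ℝ)]))
      (log_le_log (by positivity) (by gcongr))
  have hzero : Tendsto (fun n : ℕ ↦ (log (n + 3 : ℕ))⁻¹) atTop (𝓝 0) :=
    tendsto_inv_atTop_zero.comp (tendsto_log_natCast_atTop.comp (tendsto_add_atTop_nat 3))
  have hbdd (n : ℕ) : ‖∑ i ∈ Finset.range n, (A (i + 3) - A (i + 2))‖ ≤ C + C := by
    rw [Finset.sum_range_sub fun i ↦ A (i + 2)]
    exact (norm_sub_le _ _).trans (add_le_add (h _) (h _))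
  obtain ⟨L, hL⟩ := cauchySeq_tendsto_of_complete
    (hanti.cauchySeq_series_mul_of_tendsto_zero_of_bounded hzero hbdd)
  have hdiff (i : ℕ) : F (i + 3) - F (i + 2) =
      (log (i + 3 : ℕ))⁻¹ • (A (i + 3) - A (i + 2)) -
        (log (log (i + 3 : ℕ)) - log (log (i + 2 : ℕ)) -
          (log (i + 3 : ℕ) - log (i + 2 : ℕ)) / log (i + 3 : ℕ)) := by
    simp only [F, A, Finset.sum_range_succ _ (i + 3), smul_eq_mul]
    ring
  obtain ⟨T, hT⟩ := summable_log_log_sub_log_log_sub_div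
  refine ⟨L - T + F 2, (tendsto_add_atTop_iff_nat 2).1 ?_⟩
  refine ((hL.sub hT.tendsto_sum_nat).add_const (F 2)).congr fun n ↦ ?_
  rw [← Finset.sum_sub_distrib, ← Finset.sum_congr rfl fun i _ ↦ hdiff i,
    Finset.sum_range_sub fun i ↦ F (i + 2), sub_add_cancel]

end MertensSecond

section Abel

theorem hasSum_sum_fiber {α β γ : Type*} [AddCommMonoid α] [TopologicalSpace α] [ContinuousAdd α]
    [RegularSpace α] {f : β → α} {a : α} (hf : HasSum f a) (g : β → γ) {t : γ → Finset β}
    (ht : ∀ b c, b ∈ t c ↔ g b = c) : HasSum (fun c ↦ ∑ b ∈ t c, f b) a :=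
  ((Equiv.sigmaFiberEquiv g).hasSum_iff.2 hf).sigma fun c ↦
    ((Equiv.subtypeEquivRight fun b ↦ (ht b c).symm).hasSum_iff (f := fun b : t c ↦ f b)).2
      ((t c).hasSum f)

theorem tendsto_tsum_mul_pow_add_log_one_sub {b : ℕ → ℝ} {D : ℝ}
    (hsum : ∀ x ∈ Set.Ioo (0 : ℝ) 1, Summable fun m ↦ b m * x ^ m)
    (h : Tendsto (fun M : ℕ ↦ ∑ m ∈ Finset.range (M + 1), b m - log M) atTop (𝓝 D)) :
    Tendsto (fun x ↦ ∑' m, b m * x ^ m + log (1 - x)) (𝓝[<] 1)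
      (𝓝 (D - eulerMascheroniConstant)) := by
  have hpartial : Tendsto (fun M ↦ ∑ m ∈ Finset.range M, (b m - 1 / m)) atTop
      (𝓝 (D - eulerMascheroniConstant)) := by
    refine (tendsto_add_atTop_iff_nat 1).1 ((h.sub tendsto_harmonic_sub_log).congr fun M ↦ ?_)
    rw [Finset.sum_sub_distrib, Finset.sum_range_succ' (fun m : ℕ ↦ 1 / (m : ℝ)), harmonic]
    push_cast
    simp
  refine (tendsto_tsum_powerSeries_nhdsWithin_lt hpartial).congr' ?_
  filter_upwards [Ioo_mem_nhdsLT (zero_lt_one' ℝ)] with x hx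
  have hlog : HasSum (fun m : ℕ ↦ 1 / (m : ℝ) * x ^ m) (-log (1 - x)) := by
    rw [← hasSum_nat_add_iff' 1]
    simpa [div_eq_inv_mul] using
      hasSum_pow_div_log_of_abs_lt_one (abs_lt.2 ⟨by linarith [hx.1], hx.2⟩)
  simp only [sub_mul]
  rw [(hsum x hx).tsum_sub hlog.summable, hlog.tsum_eq, sub_neg_eq_add]

/-- The sum of `a` over the block `(2 ^ (m - 1), 2 ^ m]` (over `{0, 1}` if `m = 0`). Replacing
`n ^ (-s)` by `2 ^ (-s * m)` on the `m`-th block turns a Dirichlet series with coefficients `a`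
into a power series with coefficients `dyadicSum a`. -/
noncomputable def dyadicSum (a : ℕ → ℝ) (m : ℕ) : ℝ :=
  ∑ n ∈ Finset.range (2 ^ m + 1) with Nat.clog 2 n = m, a n

theorem sum_dyadicSum (a : ℕ → ℝ) (M : ℕ) :
    ∑ m ∈ Finset.range (M + 1), dyadicSum a m = ∑ n ∈ Finset.range (2 ^ M + 1), a n := by
  have hmaps : ∀ n ∈ Finset.range (2 ^ M + 1), Nat.clog 2 n ∈ Finset.range (M + 1) := by
    simp [Nat.clog_le_iff_le_pow]
  rw [← Finset.sum_fiberwise_of_maps_to hmaps]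
  refine Finset.sum_congr rfl fun m hm ↦ Finset.sum_congr ?_ fun _ _ ↦ rfl
  have hpow : 2 ^ m ≤ 2 ^ M := Nat.pow_le_pow_right two_pos (by simpa [Nat.lt_succ_iff] using hm)
  ext n
  simp only [Finset.mem_filter, Finset.mem_range, Nat.lt_succ_iff, and_congr_left_iff]
  rintro rfl
  exact iff_of_true (Nat.le_pow_clog one_lt_two n) ((Nat.le_pow_clog one_lt_two n).trans hpow)

theorem hasSum_dyadicSum_mul_pow {a : ℕ → ℝ} {x S : ℝ}
    (h : HasSum (fun n ↦ a n * x ^ Nat.clog 2 n) S) :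
    HasSum (fun m ↦ dyadicSum a m * x ^ m) S := by
  refine (hasSum_sum_fiber h (Nat.clog 2) (t := fun m ↦ {n ∈ Finset.range (2 ^ m + 1) |
    Nat.clog 2 n = m}) fun n m ↦ ?_).congr_fun fun m ↦ ?_
  · simp only [Finset.mem_filter, Finset.mem_range, Nat.lt_succ_iff, and_iff_right_iff_imp]
    rintro rfl
    exact Nat.le_pow_clog one_lt_two n
  · rw [dyadicSum, Finset.sum_mul]
    exact Finset.sum_congr rfl fun n hn ↦ by rw [(Finset.mem_filter.1 hn).2]

theorem tendsto_sum_dyadicSum_sub_log {a : ℕ → ℝ} {D : ℝ}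
    (h : Tendsto (fun n : ℕ ↦ ∑ k ∈ Finset.range (n + 1), a k - log (log n)) atTop (𝓝 D)) :
    Tendsto (fun M : ℕ ↦ ∑ m ∈ Finset.range (M + 1), dyadicSum a m - log M) atTop
      (𝓝 (D + log (log 2))) := by
  refine ((h.comp (tendsto_pow_atTop_atTop_of_one_lt one_lt_two)).add_const
    (log (log 2))).congr' ?_
  filter_upwards [eventually_ne_atTop 0] with M hM
  have hlog2 : log 2 ≠ 0 := (log_pos one_lt_two).ne'
  rw [sum_dyadicSum, Function.comp_apply, Nat.cast_pow, Nat.cast_ofNat, log_pow,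
    log_mul (mod_cast hM) hlog2]
  ring

theorem rpow_neg_clog_le {n : ℕ} (hn : n ≠ 0) {s : ℝ} (hs : 0 ≤ s) :
    ((2 : ℝ) ^ (-s)) ^ Nat.clog 2 n ≤ (n : ℝ) ^ (-s) := by
  rw [rpow_pow_comm two_pos.le]
  refine rpow_le_rpow_of_nonpos (by positivity) ?_ (neg_nonpos.2 hs)
  exact mod_cast Nat.le_pow_clog one_lt_two n

theorem le_rpow_neg_clog {n : ℕ} (hn : n ≠ 0) {s : ℝ} (hs : 0 ≤ s) :
    (2 : ℝ) ^ (-s) * (n : ℝ) ^ (-s) ≤ ((2 : ℝ) ^ (-s)) ^ Nat.clog 2 n := by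
  rw [← mul_rpow two_pos.le n.cast_nonneg, rpow_pow_comm two_pos.le]
  refine rpow_le_rpow_of_nonpos (by positivity) ?_ (neg_nonpos.2 hs)
  rcases (Nat.one_le_iff_ne_zero.2 hn).eq_or_lt with rfl | hn1
  · simp
  have hclog : Nat.clog 2 n = (Nat.clog 2 n).pred + 1 :=
    (Nat.succ_pred_eq_of_pos (Nat.clog_pos one_lt_two hn1)).symm
  rw [hclog, pow_succ']
  gcongr
  exact mod_cast (Nat.pow_pred_clog_lt_self one_lt_two hn1).le

theorem tendsto_two_rpow_neg_nhdsGT_zero :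
    Tendsto (fun s : ℝ ↦ (2 : ℝ) ^ (-s)) (𝓝[>] 0) (𝓝[<] 1) := by
  refine tendsto_nhdsWithin_iff.2 ⟨?_, ?_⟩
  · have : Continuous fun s : ℝ ↦ (2 : ℝ) ^ (-s) := by fun_prop (disch := norm_num)
    simpa using (this.tendsto 0).mono_left nhdsWithin_le_nhds
  · filter_upwards [self_mem_nhdsWithin] with s hs
    exact rpow_lt_one_of_one_lt_of_neg one_lt_two (neg_neg_iff_pos.2 hs)

theorem tendsto_log_one_sub_two_rpow_neg_sub_log :
    Tendsto (fun s : ℝ ↦ log (1 - (2 : ℝ) ^ (-s)) - log s) (𝓝[>] 0) (𝓝 (log (log 2))) := by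
  have hderiv : HasDerivAt (fun s : ℝ ↦ 1 - (2 : ℝ) ^ (-s)) (log 2) 0 := by
    simpa using ((hasDerivAt_neg (0 : ℝ)).const_rpow two_pos).const_sub 1
  refine (hderiv.tendsto_slope_zero_right.log (log_pos one_lt_two).ne').congr' ?_
  filter_upwards [self_mem_nhdsWithin] with s hs
  have hlt : (2 : ℝ) ^ (-s) < 1 :=
    rpow_lt_one_of_one_lt_of_neg one_lt_two (neg_neg_iff_pos.2 hs)
  simp only [zero_add, neg_zero, rpow_zero, sub_self, sub_zero, smul_eq_mul]
  rw [inv_mul_eq_div, log_div (sub_pos.2 hlt).ne' (ne_of_gt hs)]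

variable {a : ℕ → ℝ}

theorem mul_rpow_neg_pow_clog_le (ha : ∀ n, 0 ≤ a n) (ha0 : a 0 = 0) {s : ℝ} (hs : 0 ≤ s)
    (n : ℕ) : a n * ((2 : ℝ) ^ (-s)) ^ Nat.clog 2 n ≤ a n * (n : ℝ) ^ (-s) := by
  rcases eq_or_ne n 0 with rfl | hn
  · simp [ha0]
  · exact mul_le_mul_of_nonneg_left (rpow_neg_clog_le hn hs) (ha n)

theorem summable_mul_rpow_neg_pow_clog (ha : ∀ n, 0 ≤ a n) (ha0 : a 0 = 0) {s : ℝ} (hs : 0 ≤ s)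
    (hsum : Summable fun n : ℕ ↦ a n * (n : ℝ) ^ (-s)) :
    Summable fun n ↦ a n * ((2 : ℝ) ^ (-s)) ^ Nat.clog 2 n :=
  hsum.of_nonneg_of_le (fun n ↦ mul_nonneg (ha n) (by positivity))
    (mul_rpow_neg_pow_clog_le ha ha0 hs)

theorem tsum_dyadicSum_mul_pow_le (ha : ∀ n, 0 ≤ a n) (ha0 : a 0 = 0) {s : ℝ} (hs : 0 ≤ s)
    (hsum : Summable fun n : ℕ ↦ a n * (n : ℝ) ^ (-s)) :
    ∑' m, dyadicSum a m * ((2 : ℝ) ^ (-s)) ^ m ≤ ∑' n : ℕ, a n * (n : ℝ) ^ (-s) := by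
  have hclog := summable_mul_rpow_neg_pow_clog ha ha0 hs hsum
  rw [(hasSum_dyadicSum_mul_pow hclog.hasSum).tsum_eq]
  exact hclog.tsum_le_tsum (mul_rpow_neg_pow_clog_le ha ha0 hs) hsum

theorem mul_tsum_rpow_neg_le_tsum_dyadicSum (ha : ∀ n, 0 ≤ a n) (ha0 : a 0 = 0) {s : ℝ}
    (hs : 0 ≤ s) (hsum : Summable fun n : ℕ ↦ a n * (n : ℝ) ^ (-s)) :
    (2 : ℝ) ^ (-s) * ∑' n : ℕ, a n * (n : ℝ) ^ (-s) ≤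
      ∑' m, dyadicSum a m * ((2 : ℝ) ^ (-s)) ^ m := by
  have hclog := summable_mul_rpow_neg_pow_clog ha ha0 hs hsum
  rw [(hasSum_dyadicSum_mul_pow hclog.hasSum).tsum_eq, ← tsum_mul_left]
  refine (hsum.mul_left _).tsum_le_tsum (fun n ↦ ?_) hclog
  rcases eq_or_ne n 0 with rfl | hn
  · simp [ha0]
  · rw [mul_left_comm]
    exact mul_le_mul_of_nonneg_left (le_rpow_neg_clog hn hs) (ha n)

theorem summable_dyadicSum_mul_pow (ha : ∀ n, 0 ≤ a n) (ha0 : a 0 = 0)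
    (hsum : ∀ s : ℝ, 0 < s → Summable fun n : ℕ ↦ a n * (n : ℝ) ^ (-s)) {x : ℝ}
    (hx : x ∈ Set.Ioo 0 1) : Summable fun m ↦ dyadicSum a m * x ^ m := by
  have hs : 0 < -logb 2 x := neg_pos.2 (logb_neg one_lt_two hx.1 hx.2)
  have hclog := summable_mul_rpow_neg_pow_clog ha ha0 hs.le (hsum _ hs)
  rw [neg_neg, rpow_logb two_pos (by norm_num) hx.1] at hclog
  exact (hasSum_dyadicSum_mul_pow hclog.hasSum).summable

theorem tendsto_one_sub_mul_of_tendsto_add_log_one_sub {G : ℝ → ℝ} {D : ℝ}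
    (h : Tendsto (fun x ↦ G x + log (1 - x)) (𝓝[<] 1) (𝓝 D)) :
    Tendsto (fun x ↦ (1 - x) * G x) (𝓝[<] 1) (𝓝 0) := by
  have hone : Tendsto (fun x : ℝ ↦ 1 - x) (𝓝[<] 1) (𝓝 0) := by
    have hcont : Continuous fun x : ℝ ↦ 1 - x := by fun_prop
    simpa using (hcont.tendsto 1).mono_left nhdsWithin_le_nhds
  have hlog : Tendsto (fun x : ℝ ↦ (1 - x) * log (1 - x)) (𝓝[<] 1) (𝓝 0) := by
    simpa [Function.comp_def] using (continuous_mul_log.tendsto 0).comp hone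
  have := (hone.mul h).sub hlog
  rw [zero_mul, sub_zero] at this
  exact this.congr fun x ↦ by ring

theorem tendsto_tsum_mul_rpow_neg_add_log (ha : ∀ n, 0 ≤ a n) (ha0 : a 0 = 0)
    (hsum : ∀ s : ℝ, 0 < s → Summable fun n : ℕ ↦ a n * (n : ℝ) ^ (-s)) {D : ℝ}
    (h : Tendsto (fun n : ℕ ↦ ∑ k ∈ Finset.range (n + 1), a k - log (log n)) atTop (𝓝 D)) :
    Tendsto (fun s : ℝ ↦ ∑' n : ℕ, a n * (n : ℝ) ^ (-s) + log s) (𝓝[>] 0)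
      (𝓝 (D - eulerMascheroniConstant)) := by
  set G : ℝ → ℝ := fun x ↦ ∑' m, dyadicSum a m * x ^ m
  have habel : Tendsto (fun x ↦ G x + log (1 - x)) (𝓝[<] 1)
      (𝓝 (D + log (log 2) - eulerMascheroniConstant)) :=
    tendsto_tsum_mul_pow_add_log_one_sub
      (fun x hx ↦ summable_dyadicSum_mul_pow ha ha0 hsum hx) (tendsto_sum_dyadicSum_sub_log h)
  have hG : Tendsto (fun s : ℝ ↦ G (2 ^ (-s)) + log s) (𝓝[>] 0)
      (𝓝 (D - eulerMascheroniConstant)) := by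
    convert (habel.comp tendsto_two_rpow_neg_nhdsGT_zero).sub
      tendsto_log_one_sub_two_rpow_neg_sub_log using 2
    · simp only [Function.comp_apply]
      ring
    · ring
  have hgap : Tendsto (fun s : ℝ ↦ (1 - (2 : ℝ) ^ (-s)) * G (2 ^ (-s)) / 2 ^ (-s)) (𝓝[>] 0)
      (𝓝 0) := by
    have := ((tendsto_one_sub_mul_of_tendsto_add_log_one_sub habel).comp
      tendsto_two_rpow_neg_nhdsGT_zero).div
        (tendsto_two_rpow_neg_nhdsGT_zero.mono_right nhdsWithin_le_nhds) one_ne_zero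
    rwa [zero_div] at this
  have hupper := hG.add hgap
  rw [add_zero] at hupper
  refine tendsto_of_tendsto_of_tendsto_of_le_of_le' hG hupper ?_ ?_
  · filter_upwards [self_mem_nhdsWithin] with s hs
    exact add_le_add_left (tsum_dyadicSum_mul_pow_le ha ha0 (le_of_lt hs) (hsum s hs)) _
  · filter_upwards [self_mem_nhdsWithin] with s hs
    have hx : (0 : ℝ) < 2 ^ (-s) := by positivity
    have hle := (le_div_iff₀' hx).2
      (mul_tsum_rpow_neg_le_tsum_dyadicSum ha ha0 (le_of_lt hs) (hsum s hs))
    calc ∑' n : ℕ, a n * (n : ℝ) ^ (-s) + log s ≤ G (2 ^ (-s)) / 2 ^ (-s) + log s := by gcongr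
      _ = G (2 ^ (-s)) + log s + (1 - (2 : ℝ) ^ (-s)) * G (2 ^ (-s)) / 2 ^ (-s) := by
        field_simp
        ring

end Abel

section PrimeZeta

theorem hasSum_neg_log_one_sub_primes {f : ℕ →*₀ ℝ} (hsum : Summable (‖f ·‖)) :
    HasSum (fun p : Nat.Primes ↦ -log (1 - f p)) (log (∑' n, f n)) := by
  have hlt (p : Nat.Primes) : 0 < 1 - f p := by
    have hnorm : ‖f p‖ < 1 :=
      Summable.norm_lt_one (f := f.toMonoidHom) hsum.of_norm p.prop.one_lt
    exact sub_pos.2 ((le_norm_self _).trans_lt hnorm)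
  have hlog : Summable fun p : Nat.Primes ↦ log (1 - f p)⁻¹ := by
    simp only [log_inv, sub_eq_add_neg]
    exact (summable_log_one_add_of_summable
      (hsum.of_norm.comp_injective Nat.Primes.coe_nat_injective).neg).neg
  have hprod := (hasProd_of_hasSum_log (fun p ↦ inv_pos.2 (hlt p)) hlog.hasSum).unique
    (EulerProduct.eulerProduct_completely_multiplicative_hasProd hsum)
  rw [← hprod, log_exp]
  simpa only [log_inv] using hlog.hasSum

/-- The completely multiplicative function `n ↦ n ^ (-s)`. The case `s = 0` is excluded because
`0 ^ 0 = 1`. -/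
noncomputable def rpowNegHom {s : ℝ} (hs : s ≠ 0) : ℕ →*₀ ℝ where
  toFun n := (n : ℝ) ^ (-s)
  map_zero' := by rw [Nat.cast_zero, zero_rpow (neg_ne_zero.2 hs)]
  map_one' := by rw [Nat.cast_one, one_rpow]
  map_mul' m n := by rw [Nat.cast_mul, mul_rpow m.cast_nonneg n.cast_nonneg]

theorem hasSum_neg_log_one_sub_rpow_neg {s : ℝ} (hs : 1 < s) :
    HasSum (fun p : Nat.Primes ↦ -log (1 - (p : ℝ) ^ (-s))) (log (∑' n : ℕ, (n : ℝ) ^ (-s))) :=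
  hasSum_neg_log_one_sub_primes (f := rpowNegHom (by linarith))
    (summable_nat_rpow.2 (neg_lt_neg hs)).norm

/-- The difference `∑_p p^(-s) - log ζ(s)` for `s > 1`, written as a series over primes that still
converges at `s = 1`. -/
noncomputable def primeZetaCorrection (s : ℝ) : ℝ :=
  ∑' p : Nat.Primes, (log (1 - (p : ℝ) ^ (-s)) + (p : ℝ) ^ (-s))

theorem abs_log_one_sub_add_self_le {y : ℝ} (hy : |y| ≤ 1 / 2) : |log (1 - y) + y| ≤ 2 * y ^ 2 := by
  have h := abs_log_sub_add_sum_range_le (hy.trans_lt one_half_lt_one) 1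
  simp only [Finset.sum_range_one, zero_add, pow_one, Nat.cast_zero, div_one, one_add_one_eq_two,
    sq_abs] at h
  rw [add_comm]
  refine h.trans ?_
  rw [div_le_iff₀ (by linarith)]
  nlinarith [sq_nonneg y]

theorem abs_log_one_sub_rpow_neg_add_le {p : ℕ} (hp : 2 ≤ p) {s : ℝ} (hs : 1 ≤ s) :
    |log (1 - (p : ℝ) ^ (-s)) + (p : ℝ) ^ (-s)| ≤ 2 * (p : ℝ) ^ (-2 : ℝ) := by
  have hp2 : (2 : ℝ) ≤ p := mod_cast hp
  have hle : (p : ℝ) ^ (-s) ≤ (p : ℝ) ^ (-1 : ℝ) :=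
    rpow_le_rpow_of_exponent_le (by linarith) (neg_le_neg hs)
  have hhalf : |(p : ℝ) ^ (-s)| ≤ 1 / 2 := by
    rw [abs_of_nonneg (by positivity)]
    refine hle.trans ?_
    rw [rpow_neg_one, one_div]
    exact inv_anti₀ two_pos hp2
  calc |log (1 - (p : ℝ) ^ (-s)) + (p : ℝ) ^ (-s)| ≤ 2 * ((p : ℝ) ^ (-s)) ^ 2 :=
        abs_log_one_sub_add_self_le hhalf
    _ ≤ 2 * ((p : ℝ) ^ (-1 : ℝ)) ^ 2 := by gcongr
    _ = 2 * (p : ℝ) ^ (-2 : ℝ) := by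
        rw [← rpow_mul_natCast p.cast_nonneg]
        norm_num

theorem summable_primes_two_mul_rpow_neg_two :
    Summable fun p : Nat.Primes ↦ 2 * (p : ℝ) ^ (-2 : ℝ) :=
  (Nat.Primes.summable_rpow.2 (by norm_num)).mul_left 2

theorem summable_primeZetaCorrection {s : ℝ} (hs : 1 ≤ s) :
    Summable fun p : Nat.Primes ↦ log (1 - (p : ℝ) ^ (-s)) + (p : ℝ) ^ (-s) :=
  summable_primes_two_mul_rpow_neg_two.of_norm_bounded fun p ↦
    abs_log_one_sub_rpow_neg_add_le p.prop.two_le hs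

theorem tendsto_primeZetaCorrection_nhdsGT_one :
    Tendsto primeZetaCorrection (𝓝[>] 1) (𝓝 (primeZetaCorrection 1)) := by
  refine tendsto_tsum_of_dominated_convergence summable_primes_two_mul_rpow_neg_two (fun p ↦ ?_) ?_
  · have hp : (1 : ℝ) < p := mod_cast p.prop.one_lt
    have hrpow : ContinuousAt (fun s : ℝ ↦ (p : ℝ) ^ (-s)) 1 :=
      (continuousAt_const_rpow (by positivity)).comp continuousAt_neg
    have hne : 1 - (p : ℝ) ^ (-1 : ℝ) ≠ 0 :=
      (sub_pos.2 (rpow_lt_one_of_one_lt_of_neg hp (by norm_num))).ne'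
    exact (((continuousAt_const.sub hrpow).log hne).add hrpow).tendsto.mono_left nhdsWithin_le_nhds
  · filter_upwards [self_mem_nhdsWithin] with s hs p
    exact abs_log_one_sub_rpow_neg_add_le p.prop.two_le (le_of_lt hs)

theorem tsum_primes_rpow_neg_eq {s : ℝ} (hs : 1 < s) :
    ∑' p : Nat.Primes, (p : ℝ) ^ (-s) =
      log (∑' n : ℕ, (n : ℝ) ^ (-s)) + primeZetaCorrection s := by
  have hlog := hasSum_neg_log_one_sub_rpow_neg hs
  rw [primeZetaCorrection, ← hlog.tsum_eq,
    ← hlog.summable.tsum_add (summable_primeZetaCorrection hs.le)]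
  simp only [neg_add_cancel_left]

theorem tendsto_log_tsum_rpow_neg_add_log :
    Tendsto (fun s : ℝ ↦ log (∑' n : ℕ, (n : ℝ) ^ (-s)) + log (s - 1)) (𝓝[>] 1) (𝓝 0) := by
  have h := tendsto_sub_mul_tsum_nat_rpow.log one_ne_zero
  rw [log_one] at h
  refine h.congr' ?_
  filter_upwards [self_mem_nhdsWithin] with s hs
  have hsum : Summable fun n : ℕ ↦ (n : ℝ) ^ (-s) := summable_nat_rpow.2 (neg_lt_neg hs)
  have hpos : 0 < ∑' n : ℕ, (n : ℝ) ^ (-s) :=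
    hsum.tsum_pos (fun n ↦ by positivity) 1 (by simp)
  simp only [one_div, ← rpow_neg (Nat.cast_nonneg _)]
  rw [log_mul (sub_pos.2 hs).ne' hpos.ne', add_comm]

theorem tendsto_tsum_primes_rpow_neg_add_log :
    Tendsto (fun s : ℝ ↦ ∑' p : Nat.Primes, (p : ℝ) ^ (-s) + log (s - 1)) (𝓝[>] 1)
      (𝓝 (primeZetaCorrection 1)) := by
  have h := tendsto_log_tsum_rpow_neg_add_log.add tendsto_primeZetaCorrection_nhdsGT_one
  rw [zero_add] at h
  refine h.congr' ?_
  filter_upwards [self_mem_nhdsWithin] with s hs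
  rw [tsum_primes_rpow_neg_eq hs]
  ring

end PrimeZeta

section MertensThird

theorem sum_primesLE_eq_sum_range_indicator (f : ℕ → ℝ) (n : ℕ) :
    ∑ p ∈ n.primesLE, f p = ∑ k ∈ Finset.range (n + 1), {p | p.Prime}.indicator f k := by
  rw [Nat.primesLE_eq_filter_range, Finset.sum_filter]
  simp only [Set.indicator_apply, Set.mem_ofPred_eq]

theorem hasSum_primes_iff_indicator {f : ℕ → ℝ} {a : ℝ} :
    HasSum (fun p : Nat.Primes ↦ f p) a ↔ HasSum ({p : ℕ | p.Prime}.indicator f) a :=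
  hasSum_subtype_iff_indicator (s := {p : ℕ | p.Prime})

theorem tendsto_sum_primesLE {f : ℕ → ℝ} (hf : Summable fun p : Nat.Primes ↦ f p) :
    Tendsto (fun n : ℕ ↦ ∑ p ∈ n.primesLE, f p) atTop (𝓝 (∑' p : Nat.Primes, f p)) := by
  have h := (hasSum_primes_iff_indicator.1 hf.hasSum).tendsto_sum_nat
  simpa only [sum_primesLE_eq_sum_range_indicator] using! h.comp (tendsto_add_atTop_nat 1)

theorem exists_tendsto_sum_primesLE_inv_sub_log_log :
    ∃ M, Tendsto (fun n : ℕ ↦ ∑ p ∈ n.primesLE, (p : ℝ)⁻¹ - log (log n)) atTop (𝓝 M) := by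
  obtain ⟨C, hC⟩ := exists_abs_sum_log_div_sub_log_le
  simp only [sum_primesLE_eq_sum_range_indicator (fun p ↦ log p / p)] at hC
  obtain ⟨M, hM⟩ := exists_tendsto_sum_div_log_sub_log_log hC
  refine ⟨M, hM.congr fun n ↦ ?_⟩
  rw [sum_primesLE_eq_sum_range_indicator (fun p ↦ (p : ℝ)⁻¹)]
  congr 1
  refine Finset.sum_congr rfl fun k _ ↦ ?_
  by_cases hk : k.Prime
  · have hlog : log k ≠ 0 := (log_pos (mod_cast hk.one_lt)).ne'
    simp only [Set.indicator_of_mem (show k ∈ {p | p.Prime} from hk)]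
    rw [div_div_cancel_left' hlog]
  · simp only [Set.indicator_of_notMem (show k ∉ {p | p.Prime} from hk), zero_div]

theorem hasSum_indicator_primes_inv_mul_rpow_neg {s : ℝ} (hs : 0 < s) :
    HasSum (fun n : ℕ ↦ {p : ℕ | p.Prime}.indicator (fun p ↦ (p : ℝ)⁻¹) n * (n : ℝ) ^ (-s))
      (∑' p : Nat.Primes, (p : ℝ) ^ (-(1 + s))) := by
  have hsum : Summable fun p : Nat.Primes ↦ (p : ℝ) ^ (-(1 + s)) :=
    Nat.Primes.summable_rpow.2 (by linarith)
  have h := (hasSum_primes_iff_indicator (f := fun n ↦ (n : ℝ) ^ (-(1 + s)))).1 hsum.hasSum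
  refine h.congr_fun fun n ↦ ?_
  by_cases hn : n.Prime
  · simp only [Set.indicator_of_mem (show n ∈ {p | p.Prime} from hn)]
    rw [neg_add, rpow_add (Nat.cast_pos.2 hn.pos), rpow_neg_one]
  · simp only [Set.indicator_of_notMem (show n ∉ {p | p.Prime} from hn), zero_mul]

theorem tendsto_one_add_nhdsGT_zero : Tendsto (fun s : ℝ ↦ 1 + s) (𝓝[>] 0) (𝓝[>] 1) := by
  refine tendsto_nhdsWithin_iff.2 ⟨?_, ?_⟩
  · have : Continuous fun s : ℝ ↦ 1 + s := by fun_prop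
    simpa using (this.tendsto 0).mono_left nhdsWithin_le_nhds
  · filter_upwards [self_mem_nhdsWithin] with s hs
    exact lt_add_of_pos_right (1 : ℝ) (Set.mem_Ioi.1 hs)

theorem tendsto_sum_primesLE_inv_sub_log_log :
    Tendsto (fun n : ℕ ↦ ∑ p ∈ n.primesLE, (p : ℝ)⁻¹ - log (log n)) atTop
      (𝓝 (eulerMascheroniConstant + primeZetaCorrection 1)) := by
  obtain ⟨M, hM⟩ := exists_tendsto_sum_primesLE_inv_sub_log_log
  set a : ℕ → ℝ := {p : ℕ | p.Prime}.indicator fun p ↦ (p : ℝ)⁻¹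
  have ha (n : ℕ) : 0 ≤ a n := Set.indicator_nonneg (fun p _ ↦ by positivity) n
  have habel : Tendsto (fun s : ℝ ↦ ∑' n : ℕ, a n * (n : ℝ) ^ (-s) + log s) (𝓝[>] 0)
      (𝓝 (M - eulerMascheroniConstant)) :=
    tendsto_tsum_mul_rpow_neg_add_log ha (by simp [a])
      (fun s hs ↦ (hasSum_indicator_primes_inv_mul_rpow_neg hs).summable)
      (hM.congr fun n ↦ by rw [sum_primesLE_eq_sum_range_indicator])
  have hzeta : Tendsto (fun s : ℝ ↦ ∑' n : ℕ, a n * (n : ℝ) ^ (-s) + log s) (𝓝[>] 0)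
      (𝓝 (primeZetaCorrection 1)) := by
    refine (tendsto_tsum_primes_rpow_neg_add_log.comp tendsto_one_add_nhdsGT_zero).congr' ?_
    filter_upwards [self_mem_nhdsWithin] with s hs
    rw [Function.comp_apply, (hasSum_indicator_primes_inv_mul_rpow_neg hs).tsum_eq,
      add_sub_cancel_left]
  rwa [← tendsto_nhds_unique habel hzeta, add_sub_cancel]

theorem tendsto_sum_primesLE_log_one_sub_inv_add_log_log :
    Tendsto (fun n : ℕ ↦ ∑ p ∈ n.primesLE, log (1 - (p : ℝ)⁻¹) + log (log n)) atTop
      (𝓝 (-eulerMascheroniConstant)) := by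
  have hcorr := tendsto_sum_primesLE
    (f := fun p ↦ log (1 - (p : ℝ) ^ (-1 : ℝ)) + (p : ℝ) ^ (-1 : ℝ))
    (summable_primeZetaCorrection le_rfl)
  have h := hcorr.sub tendsto_sum_primesLE_inv_sub_log_log
  rw [← primeZetaCorrection, sub_add_cancel_right] at h
  refine h.congr fun n ↦ ?_
  simp only [rpow_neg_one, Finset.sum_add_distrib]
  ring

theorem tendsto_prod_primesLE_one_sub_inv_mul_log :
    Tendsto (fun n : ℕ ↦ (∏ p ∈ n.primesLE, (1 - (p : ℝ)⁻¹)) * log n) atTop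
      (𝓝 (exp (-eulerMascheroniConstant))) := by
  refine (tendsto_sum_primesLE_log_one_sub_inv_add_log_log.rexp).congr' ?_
  filter_upwards [eventually_ge_atTop 2] with n hn
  rw [exp_add, exp_log (log_pos (mod_cast hn)), exp_sum]
  congr 1
  refine Finset.prod_congr rfl fun p hp ↦ exp_log (sub_pos.2 (inv_lt_one_of_one_lt₀ ?_))
  exact mod_cast (Nat.prime_of_mem_primesLE hp).one_lt

end MertensThird

theorem tendsto_gammaP_primesLE :
    Tendsto (fun n : ℕ ↦ gammaP n.primesLE) atTop (𝓝 (exp (-eulerMascheroniConstant))) := by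
  have hsum : Tendsto (fun n : ℕ ↦ (eulerMascheroniConstant +
      ∑ p ∈ n.primesLE, log p / ((p : ℝ) - 1)) / log n) atTop (𝓝 1) := by
    have h := (tendsto_log_natCast_atTop.const_div_atTop eulerMascheroniConstant).add
      tendsto_sum_log_div_sub_one_div_log
    rw [zero_add] at h
    exact h.congr fun n ↦ (add_div _ _ _).symm
  have h := tendsto_prod_primesLE_one_sub_inv_mul_log.mul hsum
  rw [mul_one] at h
  refine h.congr' ?_
  filter_upwards [eventually_ge_atTop 2] with n hn
  have hlog : log n ≠ 0 := (log_pos (mod_cast hn)).ne'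
  simp only [gammaP, one_div]
  field_simp

theorem image_nth_prime_range_succ (r : ℕ) :
    (Finset.range (r + 1)).image (Nat.nth Nat.Prime) = (Nat.nth Nat.Prime r).primesLE := by
  ext p
  simp only [Finset.mem_image, Finset.mem_range, Nat.mem_primesLE, Nat.lt_succ_iff]
  constructor
  · rintro ⟨k, hk, rfl⟩
    exact ⟨(Nat.nth_strictMono Nat.infinite_setOfPred_prime).monotone hk, Nat.prime_nth_prime k⟩
  · rintro ⟨hle, hp⟩
    refine ⟨Nat.count Nat.Prime p, ?_, Nat.nth_count hp⟩
    rwa [← (Nat.nth_strictMono Nat.infinite_setOfPred_prime).le_iff_le, Nat.nth_count hp]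

/-- `γ_r → e^{-γ}` as `r → ∞`. -/
theorem gammaR_tendsto :
    Filter.Tendsto gammaR Filter.atTop
      (nhds (Real.exp (-Real.eulerMascheroniConstant))) := by
  refine (tendsto_add_atTop_iff_nat 1).1 ?_
  simp only [gammaR, image_nth_prime_range_succ]
  exact tendsto_gammaP_primesLE.comp
    (Nat.nth_strictMono Nat.infinite_setOfPred_prime).tendsto_atTop
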